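/- Let μ and ν be probability measures on [0,∞) with cumulative distribution functions F_μ and F_ν. There exists a coupling η of μ and ν (a probability measure on ℝ₊ × ℝ₊ with first marginal μ and second marginal ν) satisfying η({(x,y) : 0 ≤ y ≤ x}) = 1 if and only if ν is first-order stochastically dominated by μ, i.e. F_ν(x) ≥ F_μ(x) for every x ∈ ℝ. -/

import Mathlib

open MeasureTheory Filter Topology Set

noncomputable section

/-! If `Y ≤ X` almost surely, then `{X ≤ x}` is almost surely contained in `{Y ≤ x}`, whence the
inequality between the distribution functions. Conversely, sample both measures from the same
uniform variable `U` on `(0, 1)` through their quantile functions. The Galois connection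
`quantile μ p ≤ x ↔ p ≤ F_μ x` shows both that `quantile μ U` has law `μ` and that `F_μ ≤ F_ν`
forces `quantile ν ≤ quantile μ` on `(0, 1)`. -/

open ProbabilityTheory

section HasLaw

variable {Ω α : Type*} [MeasurableSpace Ω] [MeasurableSpace α] {P : Measure Ω} {μ ν : Measure α}
  {X Y : Ω → α}

lemma measure_preimage_inter_of_hasLaw [IsProbabilityMeasure μ] (hX : HasLaw X μ P) {s : Set α}
    (hs : MeasurableSet s) (hμs : μ s = 1) (t : Set Ω) : P (X ⁻¹' s ∩ t) = P t :=
  Measure.measure_inter_eq_of_ae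
    ((hX.ae_iff hs.mem).2 ((mem_ae_iff_prob_eq_one hs).2 hμs))

lemma measure_Iic_le_of_hasLaw_of_ae_le [TopologicalSpace α] [OpensMeasurableSpace α] [Preorder α]
    [ClosedIicTopology α] (hX : HasLaw X μ P) (hY : HasLaw Y ν P) (hYX : Y ≤ᵐ[P] X) (x : α) :
    μ (Iic x) ≤ ν (Iic x) :=
  calc μ (Iic x) = P {ω | X ω ≤ x} := (hX.measure_eq measurableSet_Iic).symm
    _ ≤ P {ω | Y ω ≤ x} := measure_mono_ae (hYX.mono fun _ hω hx ↦ hω.trans hx)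
    _ = ν (Iic x) := hY.measure_eq measurableSet_Iic

end HasLaw

section Quantile

variable {μ ν : Measure ℝ} {p : ℝ}

/-- The quantile function (generalized inverse of the distribution function) of a probability
measure on `ℝ`. It is meaningful for `0 < p < 1` only: elsewhere the infimum may be that of an
empty or unbounded set, for which `sInf` returns `0`. -/
def quantile (μ : Measure ℝ) (p : ℝ) : ℝ := sInf {x | p ≤ cdf μ x}

lemma nonempty_setOf_le_cdf (hp : p < 1) : {x | p ≤ cdf μ x}.Nonempty :=
  ((tendsto_cdf_atTop μ).eventually_const_le hp).exists

lemma bddBelow_setOf_le_cdf (hp : 0 < p) : BddBelow {x | p ≤ cdf μ x} := by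
  obtain ⟨y, hy⟩ := ((tendsto_cdf_atBot μ).eventually_lt_const hp).exists
  exact ⟨y, fun x hx ↦ ((monotone_cdf μ).reflect_lt (hy.trans_le hx)).le⟩

lemma le_cdf_quantile (hp : p < 1) : p ≤ cdf μ (quantile μ p) := by
  rw [← (cdf μ).iInf_Ioi_eq]
  refine le_ciInf fun ⟨y, hy⟩ ↦ ?_
  obtain ⟨x, hx, hxy⟩ := exists_lt_of_csInf_lt (nonempty_setOf_le_cdf hp) hy
  exact hx.trans (monotone_cdf μ hxy.le)

lemma quantile_le_iff (hp : p ∈ Ioo 0 1) {x : ℝ} : quantile μ p ≤ x ↔ p ≤ cdf μ x :=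
  ⟨fun h ↦ (le_cdf_quantile hp.2).trans (monotone_cdf μ h),
    fun h ↦ csInf_le (bddBelow_setOf_le_cdf hp.1) h⟩

lemma monotoneOn_quantile : MonotoneOn (quantile μ) (Ioo 0 1) :=
  fun _ hp _ hq hpq ↦ (quantile_le_iff hp).2 (hpq.trans (le_cdf_quantile hq.2))

lemma quantile_le_quantile (h : ∀ x, cdf μ x ≤ cdf ν x) (hp : p ∈ Ioo 0 1) :
    quantile ν p ≤ quantile μ p :=
  (quantile_le_iff hp).2 ((le_cdf_quantile hp.2).trans (h _))

lemma volume_restrict_Ioo_zero_one_Iic {c : ℝ} (hc : c ≤ 1) :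
    volume.restrict (Ioo 0 1) (Iic c) = ENNReal.ofReal c := by
  rw [restrict_Ioo_eq_restrict_Ioc, Measure.restrict_apply measurableSet_Iic,
    Iic_inter_Ioc_of_le hc, Real.volume_Ioc, sub_zero]

lemma aemeasurable_quantile : AEMeasurable (quantile μ) (volume.restrict (Ioo 0 1)) :=
  aemeasurable_restrict_of_monotoneOn measurableSet_Ioo monotoneOn_quantile

lemma hasLaw_quantile (μ : Measure ℝ) [IsProbabilityMeasure μ] :
    HasLaw (quantile μ) μ (volume.restrict (Ioo 0 1)) where
  aemeasurable := aemeasurable_quantile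
  map_eq := by
    refine Measure.ext_of_Iic _ _ fun x ↦ ?_
    have preimage_ae_eq : quantile μ ⁻¹' Iic x =ᵐ[volume.restrict (Ioo 0 1)] Iic (cdf μ x) := by
      filter_upwards [ae_restrict_mem measurableSet_Ioo] with p hp
      exact propext (quantile_le_iff hp)
    rw [Measure.map_apply_of_aemeasurable aemeasurable_quantile measurableSet_Iic,
      measure_congr preimage_ae_eq, volume_restrict_Ioo_zero_one_Iic (cdf_le_one μ x),
      ofReal_cdf]

end Quantile

section QuantileCoupling

/-- The comonotone coupling of two probability measures on `ℝ`: the joint law of their quantile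
functions evaluated at one and the same uniform variable on `(0, 1)`. -/
def quantileCoupling (μ ν : Measure ℝ) : Measure (ℝ × ℝ) :=
  (volume.restrict (Ioo 0 1)).map fun p ↦ (quantile μ p, quantile ν p)

variable {μ ν : Measure ℝ}

lemma hasLaw_quantileCoupling :
    HasLaw (fun p ↦ (quantile μ p, quantile ν p)) (quantileCoupling μ ν)
      (volume.restrict (Ioo 0 1)) where
  aemeasurable := aemeasurable_quantile.prodMk aemeasurable_quantile
  map_eq := rfl

lemma map_fst_quantileCoupling [IsProbabilityMeasure μ] :
    (quantileCoupling μ ν).map Prod.fst = μ := by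
  rw [quantileCoupling, AEMeasurable.map_map_of_aemeasurable measurable_fst.aemeasurable
    hasLaw_quantileCoupling.aemeasurable]
  exact (hasLaw_quantile μ).map_eq

lemma map_snd_quantileCoupling [IsProbabilityMeasure ν] :
    (quantileCoupling μ ν).map Prod.snd = ν := by
  rw [quantileCoupling, AEMeasurable.map_map_of_aemeasurable measurable_snd.aemeasurable
    hasLaw_quantileCoupling.aemeasurable]
  exact (hasLaw_quantile ν).map_eq

lemma ae_quantileCoupling_snd_le_fst (h : ∀ x, cdf μ x ≤ cdf ν x) :
    ∀ᵐ q ∂quantileCoupling μ ν, q.2 ≤ q.1 := by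
  rw [← hasLaw_quantileCoupling.ae_iff (by fun_prop)]
  filter_upwards [ae_restrict_mem measurableSet_Ioo] with p hp
  exact quantile_le_quantile h hp

end QuantileCoupling

theorem stmt9_general (μ ν : Measure ℝ) [IsProbabilityMeasure μ] [IsProbabilityMeasure ν] :
    (∃ η : Measure (ℝ × ℝ), IsProbabilityMeasure η ∧
        η.map Prod.fst = μ ∧ η.map Prod.snd = ν ∧ η {q : ℝ × ℝ | q.2 ≤ q.1} = 1) ↔
      ∀ x : ℝ, μ (Iic x) ≤ ν (Iic x) := by
  have measurable_le : Measurable fun q : ℝ × ℝ ↦ q.2 ≤ q.1 := by fun_prop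
  constructor
  · rintro ⟨η, _, hfst, hsnd, hle⟩
    exact measure_Iic_le_of_hasLaw_of_ae_le ⟨measurable_fst.aemeasurable, hfst⟩
      ⟨measurable_snd.aemeasurable, hsnd⟩ ((ae_iff_prob_eq_one measurable_le).2 hle)
  · intro h
    have cdf_le (x : ℝ) : cdf μ x ≤ cdf ν x := by
      rw [cdf_eq_real, cdf_eq_real]
      exact ENNReal.toReal_mono (measure_ne_top ν _) (h x)
    have : IsProbabilityMeasure (quantileCoupling μ ν) :=
      hasLaw_quantileCoupling.isProbabilityMeasure_iff.1 (hasLaw_quantile μ).isProbabilityMeasure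
    exact ⟨quantileCoupling μ ν, this, map_fst_quantileCoupling, map_snd_quantileCoupling,
      (ae_iff_prob_eq_one measurable_le).1 (ae_quantileCoupling_snd_le_fst cdf_le)⟩

/-- for probability measures `μ, ν` on `[0,∞)`, a coupling of `μ`
and `ν` concentrated on `{(x,y) : 0 ≤ y ≤ x}` exists if and only if `ν` is
first-order stochastically dominated by `μ`, i.e. `F_ν(x) ≥ F_μ(x)` for all
`x ∈ ℝ`. -/
theorem stmt9 (μ ν : Measure ℝ) [IsProbabilityMeasure μ] [IsProbabilityMeasure ν]
    (hμ : μ (Ici 0) = 1) (hν : ν (Ici 0) = 1) :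
    (∃ η : Measure (ℝ × ℝ), IsProbabilityMeasure η ∧
        η.map Prod.fst = μ ∧ η.map Prod.snd = ν ∧
        η {q : ℝ × ℝ | 0 ≤ q.2 ∧ q.2 ≤ q.1} = 1) ↔
      ∀ x : ℝ, μ (Iic x) ≤ ν (Iic x) := by
  rw [← stmt9_general μ ν]
  exact exists_congr fun η ↦ and_congr_right' <| and_congr_right' <| and_congr_right fun hsnd ↦
    (measure_preimage_inter_of_hasLaw ⟨measurable_snd.aemeasurable, hsnd⟩ measurableSet_Ici hν
      {q | q.2 ≤ q.1}).congr_left
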